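/- Let S = (N, M₀) be a live H1S system (homogeneous Petri net with at most one shared place). Then S is reversible if and only if S enables a T-sequence, i.e., a firing sequence σ feasible at M₀ containing all transitions with I·P(σ) = 0. -/

import Mathlib

open Classical

structure PetriNet (P T : Type) where
  pre  : P → T → ℕ
  post : T → P → ℕ

namespace PetriNet

variable {P T : Type}

def enabled (N : PetriNet P T) (M : P → ℕ) (t : T) : Prop :=
  ∀ p, N.pre p t ≤ M p

def fire (N : PetriNet P T) (M : P → ℕ) (t : T) : P → ℕ :=
  fun p => M p - N.pre p t + N.post t p

def feasible (N : PetriNet P T) : (P → ℕ) → List T → Prop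
  | _, [] => True
  | M, t :: σ => N.enabled M t ∧ N.feasible (N.fire M t) σ

def fireSeq (N : PetriNet P T) : (P → ℕ) → List T → (P → ℕ)
  | M, [] => M
  | M, t :: σ => N.fireSeq (N.fire M t) σ

/-- `M'` is reachable from `M` by some feasible firing sequence. -/
def reach (N : PetriNet P T) (M M' : P → ℕ) : Prop :=
  ∃ σ : List T, N.feasible M σ ∧ N.fireSeq M σ = M'

/-- Liveness: from every reachable marking, every transition can eventually be enabled. -/
def live (N : PetriNet P T) (M0 : P → ℕ) : Prop :=
  ∀ M, N.reach M0 M → ∀ t, ∃ M', N.reach M M' ∧ N.enabled M' t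

def incidence (N : PetriNet P T) (p : P) (t : T) : ℤ :=
  (N.post t p : ℤ) - (N.pre p t : ℤ)

/-- Potential reachability: the state equation `M = M0 + I·Y` has a solution `Y ∈ ℕ^T`. -/
def potReach [Fintype T] (N : PetriNet P T) (M0 M : P → ℕ) : Prop :=
  ∃ Y : T → ℕ, ∀ p, (M p : ℤ) = (M0 p : ℤ) + ∑ t, N.incidence p t * (Y t : ℤ)

/-- A siphon: a nonempty set of places whose set of input transitions is
included in its set of output transitions. -/
def siphon (N : PetriNet P T) (D : Set P) : Prop :=
  D.Nonempty ∧ ∀ t, (∃ p ∈ D, 0 < N.post t p) → ∃ p ∈ D, 0 < N.pre p t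

/-- `D` is deadlocked at `M`: every place of `D` marks below each of its output weights. -/
def deadlockedAt (N : PetriNet P T) (D : Set P) (M : P → ℕ) : Prop :=
  ∀ p ∈ D, ∀ t, 0 < N.pre p t → M p < N.pre p t

def reversible (N : PetriNet P T) (M0 : P → ℕ) : Prop :=
  ∀ M, N.reach M0 M → N.reach M M0

def deadlockable (N : PetriNet P T) (M0 : P → ℕ) : Prop :=
  ∃ M, N.reach M0 M ∧ ∀ t, ¬ N.enabled M t

def bounded (N : PetriNet P T) (M0 : P → ℕ) : Prop :=
  ∃ k, ∀ M, N.reach M0 M → ∀ p, M p ≤ k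

def structBounded (N : PetriNet P T) : Prop :=
  ∀ M0 : P → ℕ, N.bounded M0

/-- All output weights of each place are equal. -/
def homogeneous (N : PetriNet P T) : Prop :=
  ∀ p t t', 0 < N.pre p t → 0 < N.pre p t' → N.pre p t = N.pre p t'

/-- A place with at least two output transitions. -/
def sharedPlace (N : PetriNet P T) (p : P) : Prop :=
  ∃ t t', t ≠ t' ∧ 0 < N.pre p t ∧ 0 < N.pre p t'

/-- Homogeneous net with at most one shared place. -/
def H1S (N : PetriNet P T) : Prop :=
  N.homogeneous ∧ ∀ p q, N.sharedPlace p → N.sharedPlace q → p = q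

/-- H1S net such that deleting the shared place (if any) yields a WMG≤ :
every non-shared place has at most one input and at most one output transition. -/
def H1S_WMGle (N : PetriNet P T) : Prop :=
  N.H1S ∧ ∀ p, ¬ N.sharedPlace p →
    (∀ t t', 0 < N.post t p → 0 < N.post t' p → t = t') ∧
    (∀ t t', 0 < N.pre p t → 0 < N.pre p t' → t = t')

end PetriNet

namespace PetriNet

variable {P T : Type}

lemma feasible_append {N : PetriNet P T} {M : P → ℕ} {σ τ : List T} :
    N.feasible M (σ ++ τ) ↔ N.feasible M σ ∧ N.feasible (N.fireSeq M σ) τ := by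
  induction σ generalizing M with
  | nil => simp [feasible, fireSeq]
  | cons t σ ih => simp [feasible, fireSeq, ih, and_assoc]

lemma fireSeq_append {N : PetriNet P T} {M : P → ℕ} {σ τ : List T} :
    N.fireSeq M (σ ++ τ) = N.fireSeq (N.fireSeq M σ) τ := by
  induction σ generalizing M with
  | nil => rfl
  | cons t σ ih => simp [fireSeq, ih]

lemma reach_refl (N : PetriNet P T) (M : P → ℕ) : N.reach M M := ⟨[], trivial, rfl⟩

lemma reach.trans {N : PetriNet P T} {M₁ M₂ M₃ : P → ℕ} (h₁ : N.reach M₁ M₂)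
    (h₂ : N.reach M₂ M₃) : N.reach M₁ M₃ := by
  obtain ⟨σ, hσ, rfl⟩ := h₁
  obtain ⟨τ, hτ, rfl⟩ := h₂
  exact ⟨σ ++ τ, feasible_append.2 ⟨hσ, hτ⟩, fireSeq_append⟩

lemma reach_fire {N : PetriNet P T} {M : P → ℕ} {t : T} (h : N.enabled M t) :
    N.reach M (N.fire M t) := ⟨[t], ⟨h, trivial⟩, rfl⟩

lemma live.of_reach {N : PetriNet P T} {M M' : P → ℕ} (h : N.live M) (hr : N.reach M M') :
    N.live M' := fun _ h' => h _ (hr.trans h')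

lemma fire_eq {N : PetriNet P T} {M : P → ℕ} {t : T} (h : N.enabled M t) (p : P) :
    (N.fire M t p : ℤ) = M p + N.incidence p t := by
  have := h p
  simp only [fire, incidence]
  omega

/-- From a live marking, some feasible sequence contains any given transitions. -/
lemma exists_feasible_mem {N : PetriNet P T} {M : P → ℕ} (h : N.live M) (s : List T) :
    ∃ σ, N.feasible M σ ∧ ∀ t ∈ s, t ∈ σ := by
  induction s with
  | nil => exact ⟨[], trivial, by simp⟩
  | cons t s ih =>
    obtain ⟨σ, hσ, hmem⟩ := ih
    obtain ⟨_, ⟨τ, hτ, rfl⟩, ht⟩ := h _ ⟨σ, hσ, rfl⟩ t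
    refine ⟨σ ++ (τ ++ [t]), ?_, ?_⟩
    · simp only [feasible_append]
      exact ⟨hσ, hτ, ht, trivial⟩
    · intro u hu
      rcases List.mem_cons.1 hu with rfl | hu
      · simp
      · simp [hmem u hu]

/-- A transition consuming from a shared place. -/
def conflicting (N : PetriNet P T) (t : T) : Prop :=
  ∃ p, N.sharedPlace p ∧ 0 < N.pre p t

/-- In a homogeneous net, the first moment at which a place offers enough tokens for one of its
outputs is reached without using any of its outputs. -/
lemma exists_feasible_not_consuming {N : PetriNet P T} (hN : N.homogeneous) {p : P} {u : T}
    (hu : 0 < N.pre p u) {τ : List T} {M : P → ℕ} (hτ : N.feasible M τ)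
    (hp : N.pre p u ≤ N.fireSeq M τ p) :
    ∃ δ, N.feasible M δ ∧ (∀ t ∈ δ, N.pre p t = 0) ∧ N.pre p u ≤ N.fireSeq M δ p := by
  induction τ generalizing M with
  | nil => exact ⟨[], trivial, by simp, hp⟩
  | cons v τ ih =>
    by_cases hM : N.pre p u ≤ M p
    · exact ⟨[], trivial, by simp, hM⟩
    · obtain ⟨δ, hδ, hδ0, hδp⟩ := ih hτ.2 hp
      refine ⟨v :: δ, ⟨hτ.1, hδ⟩, ?_, hδp⟩
      intro t ht
      rcases List.mem_cons.1 ht with rfl | ht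
      · by_contra h0
        have h1 := hN p t u (Nat.pos_of_ne_zero h0) hu
        have h2 := hτ.1 p
        omega
      · exact hδ0 t ht

/-- `E'` is obtained from the surplus `E` by following `ρ`: on conflicting transitions it drops
by what `ρ` contains, and on all transitions if no conflicting transition was in surplus. -/
def surplusDrop [DecidableEq T] (N : PetriNet P T) (ρ : List T) (E E' : T → ℕ) : Prop :=
  (∀ t, N.conflicting t → E' t ≤ E t - ρ.count t) ∧
    ((∀ t, N.conflicting t → E t = 0) → ∀ t, E' t ≤ E t - ρ.count t)

lemma surplusDrop.append [DecidableEq T] {N : PetriNet P T} {ρ ρ' : List T} {E E' E'' : T → ℕ}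
    (h : N.surplusDrop ρ E E') (h' : N.surplusDrop ρ' E' E'') :
    N.surplusDrop (ρ ++ ρ') E E'' := by
  refine ⟨fun t ht => ?_, fun h0 t => ?_⟩
  · have h1 := h.1 t ht
    have h2 := h'.1 t ht
    rw [List.count_append]
    omega
  · have h1 := h.2 h0 t
    have h2 := h'.2 (fun v hv => by have := h.1 v hv; have := h0 v hv; omega) t
    rw [List.count_append]
    omega

variable [Fintype T]

/-- The state equation `m = μ + I·E`. -/
def stateEq (N : PetriNet P T) (μ : P → ℕ) (E : T → ℕ) (m : P → ℕ) : Prop :=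
  ∀ p, (m p : ℤ) = μ p + ∑ t, N.incidence p t * (E t : ℤ)

lemma stateEq.trans {N : PetriNet P T} {M₁ M₂ M₃ : P → ℕ} {E F : T → ℕ}
    (h₁ : N.stateEq M₁ E M₂) (h₂ : N.stateEq M₂ F M₃) :
    N.stateEq M₁ (fun t => E t + F t) M₃ := by
  intro p
  rw [h₂ p, h₁ p]
  push_cast
  simp only [mul_add, Finset.sum_add_distrib]
  ring

lemma stateEq_zero {N : PetriNet P T} {μ m : P → ℕ} {E : T → ℕ} (h : N.stateEq μ E m)
    (hE : ∀ t, E t = 0) : m = μ := by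
  funext p
  have := h p
  simpa [hE] using this

/-- A place does not lose tokens if none of its outputs is counted in the state equation. -/
lemma stateEq.le_of_forall_pre {N : PetriNet P T} {μ m : P → ℕ} {E : T → ℕ}
    (h : N.stateEq μ E m) {p : P} (hp : ∀ t, 0 < N.pre p t → E t = 0) : μ p ≤ m p := by
  have h0 : 0 ≤ ∑ t, N.incidence p t * (E t : ℤ) := by
    refine Finset.sum_nonneg fun t _ => ?_
    rcases Nat.eq_zero_or_pos (N.pre p t) with h1 | h1
    · simp only [incidence, h1, Nat.cast_zero, sub_zero]
      positivity
    · simp [hp t h1]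
  have := h p
  omega

lemma le_of_not_sharedPlace {N : PetriNet P T} {μ m : P → ℕ} {E : T → ℕ}
    (h : N.stateEq μ E m) {u : T} (hu : N.enabled μ u) (hE : E u = 0) {p : P}
    (hp : ¬ N.sharedPlace p) : N.pre p u ≤ m p := by
  rcases Nat.eq_zero_or_pos (N.pre p u) with h0 | h0
  · omega
  · refine (hu p).trans (h.le_of_forall_pre fun t ht => ?_)
    by_cases htu : t = u
    · exact htu ▸ hE
    · exact absurd ⟨t, u, htu, ht, h0⟩ hp

lemma stateEq.fire_fire {N : PetriNet P T} {μ m : P → ℕ} {E : T → ℕ} (h : N.stateEq μ E m)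
    {u : T} (hμ : N.enabled μ u) (hm : N.enabled m u) :
    N.stateEq (N.fire μ u) E (N.fire m u) := by
  intro p
  rw [fire_eq hμ, fire_eq hm, h p]
  ring

variable [DecidableEq T]

lemma stateEq_fire {N : PetriNet P T} {M : P → ℕ} {t : T} (h : N.enabled M t) :
    N.stateEq M (fun v => [t].count v) (N.fire M t) := by
  intro p
  rw [fire_eq h]
  simp [List.count_singleton]

lemma stateEq_fireSeq {N : PetriNet P T} {M : P → ℕ} {σ : List T} (h : N.feasible M σ) :
    N.stateEq M (fun t => σ.count t) (N.fireSeq M σ) := by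
  induction σ generalizing M with
  | nil => intro p; simp [fireSeq]
  | cons t σ ih =>
    have := (stateEq_fire h.1).trans (ih h.2)
    simpa [fireSeq, ← List.count_append] using this

/-- A transition counted in `E` and fired at `μ` may be dropped from `E`. -/
lemma stateEq.fire_left {N : PetriNet P T} {μ m : P → ℕ} {E : T → ℕ} (h : N.stateEq μ E m)
    {u : T} (hμ : N.enabled μ u) (hE : 0 < E u) :
    N.stateEq (N.fire μ u) (fun v => E v - [u].count v) m := by
  intro p
  have hsum : ∑ t, N.incidence p t * ((E t - [u].count t : ℕ) : ℤ)
      = ∑ t, N.incidence p t * (E t : ℤ) - ∑ t, N.incidence p t * ([u].count t : ℤ) := by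
    rw [← Finset.sum_sub_distrib]
    refine Finset.sum_congr rfl fun t _ => ?_
    have hle : [u].count t ≤ E t := by
      by_cases htu : u = t
      · subst htu; simpa [Nat.one_le_iff_ne_zero, Nat.pos_iff_ne_zero] using hE
      · simp [htu]
    rw [Nat.cast_sub hle, mul_sub]
  rw [hsum, stateEq_fire hμ p, h p]
  ring

/-- A marking `m` ahead of `μ` by the surplus `E` can follow any transition fired at `μ`. -/
lemma exists_follow_fire {N : PetriNet P T} (hN : N.H1S) {μ m : P → ℕ} {E : T → ℕ}
    (hlive : N.live m) (h : N.stateEq μ E m) {u : T} (hu : N.enabled μ u) :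
    ∃ m' E', N.reach m m' ∧ N.stateEq (N.fire μ u) E' m' ∧ N.surplusDrop [u] E E' := by
  rcases Nat.eq_zero_or_pos (E u) with hE | hE
  swap
  · exact ⟨m, _, N.reach_refl m, h.fire_left hu hE, fun _ _ => le_rfl, fun _ _ => le_rfl⟩
  have hcount : ∀ t, E t - [u].count t = E t := by
    intro t
    by_cases htu : u = t
    · subst htu; simp [hE]
    · simp [htu]
  by_cases hm : N.enabled m u
  · refine ⟨_, E, reach_fire hm, h.fire_fire hu hm, ?_, ?_⟩ <;> simp [hcount]
  obtain ⟨p, hp⟩ : ∃ p, m p < N.pre p u := by simpa [enabled] using hm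
  have hps : N.sharedPlace p := by
    by_contra hps
    have := le_of_not_sharedPlace h hu hE hps
    omega
  obtain ⟨_, ⟨τ, hτ, rfl⟩, hτu⟩ := hlive m (N.reach_refl m) u
  obtain ⟨δ, hδ, hδ0, hδp⟩ :=
    exists_feasible_not_consuming hN.1 (p := p) (u := u) (by omega) hτ (hτu p)
  have hδc : ∀ t, N.conflicting t → δ.count t = 0 := by
    rintro t ⟨q, hq, hqt⟩
    obtain rfl := hN.2 _ _ hq hps
    refine List.count_eq_zero.2 fun ht => ?_
    have := hδ0 t ht
    omega
  have hstate := h.trans (stateEq_fireSeq hδ)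
  have hu' : N.enabled (N.fireSeq m δ) u := by
    intro q
    by_cases hq : N.sharedPlace q
    · obtain rfl := hN.2 _ _ hq hps
      exact hδp
    · exact le_of_not_sharedPlace hstate hu (by simp [hE, hδc u ⟨p, hps, by omega⟩]) hq
  refine ⟨_, _, reach.trans ⟨δ, hδ, rfl⟩ (reach_fire hu'), hstate.fire_fire hu hu', ?_, ?_⟩
  · intro t ht
    simp [hcount, hδc t ht]
  · intro h0
    have h1 := h.le_of_forall_pre (p := p) fun t ht => h0 t ⟨p, hps, ht⟩
    have h2 := hu p
    omega

lemma exists_follow_fireSeq {N : PetriNet P T} (hN : N.H1S) {ρ : List T} {μ m : P → ℕ}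
    {E : T → ℕ} (hlive : N.live m) (h : N.stateEq μ E m) (hρ : N.feasible μ ρ) :
    ∃ m' E', N.reach m m' ∧ N.stateEq (N.fireSeq μ ρ) E' m' ∧ N.surplusDrop ρ E E' := by
  induction ρ generalizing μ m E with
  | nil => exact ⟨m, E, N.reach_refl m, h, by simp [surplusDrop]⟩
  | cons u ρ ih =>
    obtain ⟨m₁, E₁, hr₁, hs₁, hd₁⟩ := exists_follow_fire hN hlive h hρ.1
    obtain ⟨m₂, E₂, hr₂, hs₂, hd₂⟩ := ih (hlive.of_reach hr₁) hs₁ hρ.2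
    exact ⟨m₂, E₂, hr₁.trans hr₂, hs₂, hd₁.append hd₂⟩

/-- Following a cyclic sequence repeatedly. -/
lemma exists_follow_cycle {N : PetriNet P T} (hN : N.H1S) {σ : List T} {μ m : P → ℕ}
    {E : T → ℕ} (hlive : N.live m) (h : N.stateEq μ E m) (hσ : N.feasible μ σ)
    (hcycle : N.fireSeq μ σ = μ) (k : ℕ) :
    ∃ m' E', N.reach m m' ∧ N.stateEq μ E' m' ∧
      N.surplusDrop (List.replicate k σ).flatten E E' := by
  induction k generalizing m E with
  | zero => exact ⟨m, E, N.reach_refl m, h, by simp [surplusDrop]⟩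
  | succ k ih =>
    obtain ⟨m₁, E₁, hr₁, hs₁, hd₁⟩ := exists_follow_fireSeq hN hlive h hσ
    obtain ⟨m₂, E₂, hr₂, hs₂, hd₂⟩ := ih (hlive.of_reach hr₁) (hcycle ▸ hs₁)
    exact ⟨m₂, E₂, hr₁.trans hr₂, hs₂, by simpa [List.replicate_succ] using hd₁.append hd₂⟩

lemma sub_count_flatten_replicate_sum {σ : List T} (hfull : ∀ t, 1 ≤ σ.count t) (E : T → ℕ)
    (t : T) : E t - (List.replicate (∑ v, E v) σ).flatten.count t = 0 := by
  have h1 : E t ≤ ∑ v, E v := Finset.single_le_sum (fun _ _ => Nat.zero_le _) (Finset.mem_univ t)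
  have h2 : (List.replicate (∑ v, E v) σ).flatten.count t = (∑ v, E v) * σ.count t := by
    simp [List.count_flatten]
  rw [h2]
  exact Nat.sub_eq_zero_of_le (h1.trans (Nat.le_mul_of_pos_right _ (hfull t)))

end PetriNet

open PetriNet in
/-- a live H1S system is reversible iff it enables a T-sequence:
a feasible sequence containing all transitions whose Parikh vector is annihilated
by the incidence matrix. -/
theorem stmt13 {P T : Type} [Fintype T] [DecidableEq T] (N : PetriNet P T)
    (M0 : P → ℕ) (hclass : N.H1S) (hlive : N.live M0) :
    N.reversible M0 ↔
      ∃ σ : List T, N.feasible M0 σ ∧ (∀ t, 1 ≤ σ.count t) ∧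
        ∀ p, ∑ t, N.incidence p t * (σ.count t : ℤ) = 0 := by
  constructor
  · intro hrev
    obtain ⟨σ, hσ, hmem⟩ := exists_feasible_mem hlive (Finset.univ : Finset T).toList
    obtain ⟨τ, hτ, hback⟩ := hrev _ ⟨σ, hσ, rfl⟩
    have hfeas : N.feasible M0 (σ ++ τ) := feasible_append.2 ⟨hσ, hτ⟩
    refine ⟨σ ++ τ, hfeas, fun t => ?_, fun p => ?_⟩
    · exact List.count_pos_iff.2 (List.mem_append_left _ (hmem t (by simp)))
    · have := stateEq_fireSeq hfeas p
      rw [fireSeq_append, hback] at this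
      linarith
  · rintro ⟨σ, hσ, hfull, hzero⟩ _ ⟨α, hα, rfl⟩
    have hcycle : N.fireSeq M0 σ = M0 := by
      funext p
      have := stateEq_fireSeq hσ p
      rw [hzero p] at this
      simpa using this
    have hliveα := hlive.of_reach ⟨α, hα, rfl⟩
    obtain ⟨m₁, E₁, hr₁, hs₁, hd₁⟩ := exists_follow_cycle hclass hliveα (stateEq_fireSeq hα) hσ
      hcycle (∑ t, α.count t)
    obtain ⟨m₂, E₂, hr₂, hs₂, hd₂⟩ := exists_follow_cycle hclass (hliveα.of_reach hr₁) hs₁ hσ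
      hcycle (∑ t, E₁ t)
    have hE₁ : ∀ t, N.conflicting t → E₁ t = 0 := fun t ht =>
      Nat.le_zero.1 ((hd₁.1 t ht).trans
        (sub_count_flatten_replicate_sum hfull (fun t => α.count t) t).le)
    have hE₂ : ∀ t, E₂ t = 0 := fun t =>
      Nat.le_zero.1 ((hd₂.2 hE₁ t).trans (sub_count_flatten_replicate_sum hfull _ t).le)
    exact stateEq_zero hs₂ hE₂ ▸ hr₁.trans hr₂
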